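/- (Corollary 4.2, case m = 0.) For every integer n ≥ 2 and every real μ > 1, the function Φ^{(n,0)} vanishes at every nonzero even multiple of π: Φ^{(n,0)}(2πα) = 0 for every α ∈ ℤ \ {0}, while Φ^{(n,0)}(0) = 1. -/

import Mathlib

open MeasureTheory Filter Complex

/-- Binomial coefficient `binom p q` extended to integer `q`, zero outside `0 ≤ q ≤ p`. -/
noncomputable def binomZ (p : ℕ) (q : ℤ) : ℝ :=
  if 0 ≤ q then (p.choose q.toNat : ℝ) else 0

/-- The nonstationary mask `a^{(n,m)}_α` with tension parameter `μ`. -/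
noncomputable def maskNS (n m : ℕ) (μ : ℝ) (α : ℤ) : ℝ :=
  if m = 0 then (if α = 0 ∨ α = 1 then 1/2 else 0)
  else if 0 ≤ α ∧ α ≤ (n : ℤ) + 1 then
    (2 : ℝ) ^ (-((n : ℝ) + 1 + (m : ℝ) ^ (-μ))) *
      (binomZ (n+1) α + 4 * ((2 : ℝ) ^ ((m : ℝ) ^ (-μ)) - 1) * binomZ (n-1) (α-1))
  else 0

/-- The symbol `A^{(n,m)}(z) = Σ_{α=0}^{n+1} a^{(n,m)}_α z^α`. -/
noncomputable def symbolNS (n m : ℕ) (μ : ℝ) (z : ℂ) : ℂ :=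
  ∑ α ∈ Finset.range (n+2), (maskNS n m μ (α : ℤ) : ℂ) * z ^ α

/-- Partial product `∏_{k=m}^{N-1} A^{(n,k)}(e^{-iω/2^{k+1}})` of the infinite product
defining the Fourier transform `Φ^{(n,m)}` of the refinable ripplet `φ^{(n,m)}`. -/
noncomputable def partialProdNS (n m : ℕ) (μ : ℝ) (ω : ℝ) (N : ℕ) : ℂ :=
  ∏ k ∈ Finset.Ico m N, symbolNS n k μ (Complex.exp (-(Complex.I * ω) / 2 ^ (k + 1)))

/-!
For `m ≥ 1` the symbol of level `m` is an affine combination, with weights `t = 2 ^ (-m ^ (-μ))`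
and `1 - t`, of the B-spline symbol `((1 + z) / 2) ^ (n + 1)` of degree `n` and the shifted one
`z * ((1 + z) / 2) ^ (n - 1)` of degree `n - 2`; at level `0` it is `(1 + z) / 2`. Hence every
symbol takes the value `1` at `1` and `0` at `-1`. At the origin every factor of the infinite
product is a symbol evaluated at `1`; at `2πα` with `α = 2 ^ k * b`, `b` odd, the factor of index
`k` is a symbol evaluated at `e^{-iπb} = -1`.
-/

section Binomial

lemma binomZ_natCast (p q : ℕ) : binomZ p q = p.choose q := by
  simp [binomZ]

lemma binomZ_of_neg (p : ℕ) {q : ℤ} (hq : q < 0) : binomZ p q = 0 :=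
  if_neg hq.not_ge

lemma sum_range_binomZ_mul_pow {p N : ℕ} (hpN : p < N) (z : ℂ) :
    ∑ α ∈ Finset.range N, (binomZ p α : ℂ) * z ^ α = (1 + z) ^ p := by
  have hvanish : ∀ α ≥ p + 1, (binomZ p α : ℂ) * z ^ α = 0 := fun α hα => by
    simp [binomZ_natCast, Nat.choose_eq_zero_of_lt hα]
  rw [Finset.eventually_constant_sum hvanish hpN, add_comm 1 z, add_pow]
  refine Finset.sum_congr rfl fun α _ => ?_
  simp [binomZ_natCast, mul_comm]

lemma sum_range_binomZ_sub_one_mul_pow {p N : ℕ} (hpN : p < N) (z : ℂ) :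
    ∑ α ∈ Finset.range (N + 1), (binomZ p (α - 1) : ℂ) * z ^ α = z * (1 + z) ^ p := by
  rw [Finset.sum_range_succ', ← sum_range_binomZ_mul_pow hpN, Finset.mul_sum]
  simp [binomZ_of_neg, pow_succ', mul_left_comm]

end Binomial

section Symbol

variable {n m : ℕ} (μ : ℝ)

lemma symbolNS_level_zero (n : ℕ) (z : ℂ) : symbolNS n 0 μ z = (1 + z) / 2 := by
  have hvanish : ∀ α ≥ 2, (maskNS n 0 μ (α : ℕ) : ℂ) * z ^ α = 0 := fun α hα => by
    have hα' : ¬((α : ℤ) = 0 ∨ (α : ℤ) = 1) := by omega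
    rw [maskNS, if_pos rfl, if_neg hα', ofReal_zero, zero_mul]
  rw [symbolNS, Finset.eventually_constant_sum hvanish (Nat.le_add_left 2 n)]
  simp [maskNS, Finset.sum_range_succ, div_eq_inv_mul, mul_add]

lemma maskNS_eq_affine_combination (hn : n ≠ 0) (hm : m ≠ 0) {α : ℕ} (hα : α ≤ n + 1) :
    maskNS n m μ α =
      (2 : ℝ) ^ (-(m : ℝ) ^ (-μ)) * (binomZ (n + 1) α / 2 ^ (n + 1)) +
        (1 - (2 : ℝ) ^ (-(m : ℝ) ^ (-μ))) * (binomZ (n - 1) (α - 1) / 2 ^ (n - 1)) := by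
  obtain ⟨p, rfl⟩ := Nat.exists_eq_succ_of_ne_zero hn
  have hα' : 0 ≤ (α : ℤ) ∧ (α : ℤ) ≤ (p.succ : ℕ) + 1 := by omega
  rw [maskNS, if_neg hm, if_pos hα', neg_add, Real.rpow_add two_pos, ← Nat.cast_succ,
    Real.rpow_neg two_pos.le, Real.rpow_neg two_pos.le, Real.rpow_natCast]
  simp only [Nat.succ_eq_add_one, Nat.add_sub_cancel]
  field_simp
  ring

lemma symbolNS_eq_affine_combination (hn : n ≠ 0) (hm : m ≠ 0) (z : ℂ) :
    symbolNS n m μ z =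
      ((2 : ℝ) ^ (-(m : ℝ) ^ (-μ)) : ℝ) * ((1 + z) / 2) ^ (n + 1) +
        (1 - ((2 : ℝ) ^ (-(m : ℝ) ^ (-μ)) : ℝ)) * (z * ((1 + z) / 2) ^ (n - 1)) := by
  rw [div_pow, div_pow, ← mul_div_assoc z, ← sum_range_binomZ_mul_pow (Nat.lt_succ_self (n + 1)),
    ← sum_range_binomZ_sub_one_mul_pow (show n - 1 < n + 1 by omega), Finset.sum_div,
    Finset.sum_div, Finset.mul_sum, Finset.mul_sum, ← Finset.sum_add_distrib]
  refine Finset.sum_congr rfl fun α hα => ?_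
  rw [maskNS_eq_affine_combination μ hn hm (Finset.mem_range_succ_iff.1 hα)]
  push_cast
  ring

lemma symbolNS_one (hn : n ≠ 0) (m : ℕ) : symbolNS n m μ 1 = 1 := by
  rcases eq_or_ne m 0 with rfl | hm
  · norm_num [symbolNS_level_zero]
  · norm_num [symbolNS_eq_affine_combination μ hn hm]

lemma symbolNS_neg_one (hn : 2 ≤ n) (m : ℕ) : symbolNS n m μ (-1) = 0 := by
  rcases eq_or_ne m 0 with rfl | hm
  · norm_num [symbolNS_level_zero]
  · have hn' : n - 1 ≠ 0 := by omega
    simp [symbolNS_eq_affine_combination μ (by omega : n ≠ 0) hm, hn']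

end Symbol

section PartialProduct

variable {n : ℕ} (μ : ℝ)

lemma partialProdNS_zero (hn : n ≠ 0) (m N : ℕ) : partialProdNS n m μ 0 N = 1 :=
  Finset.prod_eq_one fun k _ => by simpa using symbolNS_one μ hn k

lemma exp_neg_I_mul_two_pow_mul_pi_mul_odd (k : ℕ) {b : ℤ} (hb : Odd b) :
    exp (-(I * (2 ^ (k + 1) * Real.pi * b : ℝ)) / 2 ^ (k + 1)) = -1 := by
  have hexponent : -(I * (2 ^ (k + 1) * Real.pi * b : ℝ)) / 2 ^ (k + 1) =
      ((-b : ℤ) : ℂ) * (Real.pi * I) := by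
    push_cast
    field_simp
  rw [hexponent, exp_int_mul, exp_pi_mul_I, hb.neg.neg_one_zpow]

lemma partialProdNS_two_pow_mul_pi_mul_odd (hn : 2 ≤ n) {m k N : ℕ} (hmk : m ≤ k) (hkN : k < N)
    {b : ℤ} (hb : Odd b) : partialProdNS n m μ (2 ^ (k + 1) * Real.pi * b) N = 0 := by
  refine Finset.prod_eq_zero (Finset.mem_Ico.2 ⟨hmk, hkN⟩) ?_
  rw [exp_neg_I_mul_two_pow_mul_pi_mul_odd k hb, symbolNS_neg_one μ hn]

end PartialProduct

lemma int_exists_eq_two_pow_mul_odd {a : ℤ} (ha : a ≠ 0) :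
    ∃ (k : ℕ) (b : ℤ), Odd b ∧ a = 2 ^ k * b := by
  have hfin : FiniteMultiplicity 2 a := Int.finiteMultiplicity_iff.2 ⟨by decide, ha⟩
  obtain ⟨b, hab, hb⟩ := hfin.exists_eq_pow_mul_and_not_dvd
  exact ⟨_, b, Int.not_even_iff_odd.1 (mt Even.two_dvd hb), hab⟩

theorem strang_fix_level_zero_general {n : ℕ} (hn : 2 ≤ n) (m : ℕ) (μ : ℝ) (Φ : ℝ → ℂ)
    (hΦ : ∀ ω : ℝ, Tendsto (fun N => partialProdNS n m μ ω N) atTop (nhds (Φ ω))) :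
    (∀ α : ℤ, α ≠ 0 → Φ (2 ^ m * (2 * Real.pi * α)) = 0) ∧ Φ 0 = 1 := by
  constructor
  · intro α hα
    obtain ⟨k, b, hb, rfl⟩ := int_exists_eq_two_pow_mul_odd hα
    have hω : (2 : ℝ) ^ m * (2 * Real.pi * (2 ^ k * b : ℤ)) =
        2 ^ (m + k + 1) * Real.pi * b := by
      push_cast
      ring
    rw [hω]
    refine tendsto_nhds_unique (hΦ _) (tendsto_const_nhds.congr' ?_)
    filter_upwards [eventually_gt_atTop (m + k)] with N hN
    exact (partialProdNS_two_pow_mul_pi_mul_odd μ hn (Nat.le_add_right m k) hN hb).symm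
  · refine tendsto_nhds_unique (hΦ 0) (tendsto_const_nhds.congr fun N => ?_)
    exact (partialProdNS_zero μ (by omega) m N).symm

/-- Corollary 4.2, case `m = 0`: `Φ^{(n,0)}` vanishes at every nonzero even multiple of `π`
and equals `1` at the origin. -/
theorem strang_fix_level_zero (n : ℕ) (hn : 2 ≤ n) (μ : ℝ) (hμ : 1 < μ)
    (Φ : ℝ → ℂ)
    (hΦ : ∀ ω : ℝ, Tendsto (fun N => partialProdNS n 0 μ ω N) atTop (nhds (Φ ω))) :
    (∀ α : ℤ, α ≠ 0 → Φ (2 * Real.pi * α) = 0) ∧ Φ 0 = 1 := by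
  simpa only [pow_zero, one_mul] using strang_fix_level_zero_general hn 0 μ Φ hΦ
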